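/- If a subset S of a topological space (X, τ) is P-exact, i.e. L_P(S) = U_P(S), then S is δP-exact, i.e. L_δP(S) = U_δP(S). Equivalently, every δP-rough set (one with L_δP(S) ≠ U_δP(S)) is P-rough (has L_P(S) ≠ U_P(S)). -/

import Mathlib

open Set

variable {X : Type*}

/-- The δ-closure of a set `S`: points `x` such that every open set `A` containing `x`
satisfies `S ∩ interior (closure A) ≠ ∅`. -/
def deltaCl [TopologicalSpace X] (S : Set X) : Set X :=
  {x | ∀ A : Set X, IsOpen A → x ∈ A → (S ∩ interior (closure A)).Nonempty}

/-- The δ-interior of `S` is the complement of the δ-closure of the complement. -/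
def deltaInt [TopologicalSpace X] (S : Set X) : Set X := (deltaCl Sᶜ)ᶜ

/-- `S` is δP-open if `S ⊆ int (cl_δ S)`. -/
def DeltaPOpen [TopologicalSpace X] (S : Set X) : Prop := S ⊆ interior (deltaCl S)

/-- `S` is δP-closed if its complement is δP-open. -/
def DeltaPClosed [TopologicalSpace X] (S : Set X) : Prop := DeltaPOpen Sᶜ

/-- The δP-closure / δP-upper approximation of `S`:
the intersection of all δP-closed sets containing `S`. -/
def PclDelta [TopologicalSpace X] (S : Set X) : Set X := ⋂₀ {W | DeltaPClosed W ∧ S ⊆ W}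

/-- The δP-interior / δP-lower approximation of `S`:
the union of all δP-open sets contained in `S`. -/
def PintDelta [TopologicalSpace X] (S : Set X) : Set X := ⋃₀ {V | DeltaPOpen V ∧ V ⊆ S}

/-- `S` is preopen if `S ⊆ int (cl S)`. -/
def PreOpen [TopologicalSpace X] (S : Set X) : Prop := S ⊆ interior (closure S)

/-- `S` is preclosed if its complement is preopen. -/
def PreClosed [TopologicalSpace X] (S : Set X) : Prop := PreOpen Sᶜ

/-- The P-lower approximation of `S`: the union of all preopen sets contained in `S`. -/
def PLower [TopologicalSpace X] (S : Set X) : Set X := ⋃₀ {V | PreOpen V ∧ V ⊆ S}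

/-- The P-upper approximation of `S`: the intersection of all preclosed sets containing `S`. -/
def PUpper [TopologicalSpace X] (S : Set X) : Set X := ⋂₀ {W | PreClosed W ∧ S ⊆ W}

section

variable [TopologicalSpace X] {S : Set X}

theorem closure_subset_deltaCl : closure S ⊆ deltaCl S := by
  intro x hx A hA hxA
  rw [inter_comm]
  exact (mem_closure_iff.1 hx A hA hxA).mono
    (inter_subset_inter_left S hA.subset_interior_closure)

theorem PreOpen.deltaPOpen (hS : PreOpen S) : DeltaPOpen S :=
  hS.trans (interior_mono closure_subset_deltaCl)

theorem PreClosed.deltaPClosed (hS : PreClosed S) : DeltaPClosed S :=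
  PreOpen.deltaPOpen hS

theorem pLower_subset_pintDelta : PLower S ⊆ PintDelta S :=
  sUnion_subset_sUnion fun _ ⟨hV, hVS⟩ => ⟨hV.deltaPOpen, hVS⟩

theorem pclDelta_subset_pUpper : PclDelta S ⊆ PUpper S :=
  sInter_subset_sInter fun _ ⟨hW, hSW⟩ => ⟨hW.deltaPClosed, hSW⟩

theorem pintDelta_subset : PintDelta S ⊆ S :=
  sUnion_subset fun _ hV => hV.2

theorem subset_pclDelta : S ⊆ PclDelta S :=
  subset_sInter fun _ hW => hW.2

end

theorem p_exact_deltaP_exact [TopologicalSpace X] (S : Set X) :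
    (PLower S = PUpper S → PintDelta S = PclDelta S) ∧
      (PintDelta S ≠ PclDelta S → PLower S ≠ PUpper S) := by
  have pExact_imp_deltaPExact (hS : PLower S = PUpper S) : PintDelta S = PclDelta S := by
    apply Subset.antisymm
    · exact pintDelta_subset.trans subset_pclDelta
    · calc
        PclDelta S ⊆ PUpper S := pclDelta_subset_pUpper
        _ = PLower S := hS.symm
        _ ⊆ PintDelta S := pLower_subset_pintDelta
  exact ⟨pExact_imp_deltaPExact, mt pExact_imp_deltaPExact⟩
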